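/- arXiv:1912.08951 — 2 statements merged into one kernel-verified Lean document; each statement's English description precedes it below -/
import Mathlib

section
/- Let b, c, m ∈ ℕ, ε > 0, and α, β ∈ (0,1). If there exists an ε-differentially private algorithm A : ({0,1}^c × {0,1}^b × {0,1}^2)^m → PMF(functions {0,1}^c × {0,1}^b → {0,1}^2) that is an (α,β)-PAC learner for the concatenated class C_{b,c} with sample complexity m, then there exists an ε-differentially private algorithm that is an (α,β)-PAC learner for Threshold_b with sample complexity m. -/
open scoped ENNReal

/-- Two databases of size `m` are neighboring if they differ in at most one entry. -/
def Neighbor {X : Type*} {m : ℕ} (x x' : Fin m → X) : Prop :=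
  ∃ i : Fin m, ∀ j : Fin m, j ≠ i → x j = x' j

/-- The probability that a sample from `P` lands in the set `T`. -/
noncomputable def prOf {Y : Type*} (P : PMF Y) (T : Set Y) : ℝ≥0∞ :=
  P.toOuterMeasure T

/-- `ε`-differential privacy for a mechanism operating on databases of size `m`. -/
def DPAlg {X Y : Type*} {m : ℕ} (ε : ℝ) (A : (Fin m → X) → PMF Y) : Prop :=
  ∀ x x' : Fin m → X, Neighbor x x' → ∀ T : Set Y,
    prOf (A x) T ≤ ENNReal.ofReal (Real.exp ε) * prOf (A x') T

/-- `ε`-differential privacy for a local randomizer. -/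
def DPRand {X Y : Type*} (ε : ℝ) (R : X → PMF Y) : Prop :=
  ∀ x x' : X, ∀ T : Set Y,
    prOf (R x) T ≤ ENNReal.ofReal (Real.exp ε) * prOf (R x') T

/-- `m` i.i.d. samples from the distribution `D`. -/
noncomputable def iid {Z : Type*} (D : PMF Z) : (m : ℕ) → PMF (Fin m → Z)
  | 0 => PMF.pure (fun i => i.elim0)
  | m + 1 => (iid D m).bind fun f => D.bind fun z => PMF.pure (Fin.cons z f)

/-- Independent product of finitely many PMFs. -/
noncomputable def pmfPi : (n : ℕ) → {T : Fin n → Type} → (∀ i, PMF (T i)) → PMF (∀ i, T i)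
  | 0, _, _ => PMF.pure (fun i => i.elim0)
  | n + 1, T, P =>
      (P 0).bind fun t0 =>
        (@pmfPi n (fun i => T i.succ) (fun i => P i.succ)).bind fun ts =>
          PMF.pure (Fin.cons t0 ts)

/-- XOR of a finite family of bits. -/
def xorFold {I : Type*} [Fintype I] (f : I → Bool) : Bool :=
  decide ((Finset.univ.filter (fun i => f i = true)).card % 2 = 1)

/-- The parity function `Par_k(x) = ⊕ k_i x_i`. -/
def Par {c : ℕ} (k x : Fin c → Bool) : Bool := xorFold (fun i => k i && x i)

/-- Interpret a bit string as an integer in `{0, …, 2^b − 1}`. -/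
def bitsToNat {b : ℕ} (y : Fin b → Bool) : ℕ :=
  ∑ i : Fin b, if y i then 2 ^ (i : ℕ) else 0

/-- The threshold function `Thr_t(y) = 1` iff `y ≥ t`. -/
def Thr {b : ℕ} (t y : Fin b → Bool) : Bool := decide (bitsToNat t ≤ bitsToNat y)

/-- Generalization error of hypothesis `h` w.r.t. target `c` under distribution `D`. -/
noncomputable def errD {Z L : Type*} (D : PMF Z) (c h : Z → L) : ℝ≥0∞ :=
  prOf D {z | h z ≠ c z}

/-- `(α, β)`-PAC learning for the concept class `C` with sample complexity `m`:
for every concept in `C` and distribution `D` on the domain, when the `m` examples are drawn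
i.i.d. from `D` and labeled by the concept, with probability at least `1 − β` the output
hypothesis has generalization error at most `α`. -/
def PACLearner {Z L : Type*} {m : ℕ} (α β : ℝ) (C : Set (Z → L))
    (A : (Fin m → Z × L) → PMF (Z → L)) : Prop :=
  ∀ c ∈ C, ∀ D : PMF Z,
    ENNReal.ofReal (1 - β) ≤
      prOf ((iid D m).bind fun s => A (fun i => (s i, c (s i))))
        {h | errD D c h ≤ ENNReal.ofReal α}

/-- The concatenated class `C_{b,c}` of functions `c_{k,t}(x,y) = (Par_k(x), Thr_t(y))`. -/
def ConcatClass (b c : ℕ) : Set ((Fin c → Bool) × (Fin b → Bool) → Bool × Bool) :=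
  {f | ∃ (k : Fin c → Bool) (t : Fin b → Bool), f = fun p => (Par k p.1, Thr t p.2)}

/-- The class `Threshold_b` of threshold functions. -/
def ThresholdClass (b : ℕ) : Set ((Fin b → Bool) → Bool) :=
  {f | ∃ t : Fin b → Bool, f = fun y => Thr t y}

theorem prOf_map {Y Y' : Type*} (P : PMF Y) (g : Y → Y') (T : Set Y') :
    prOf (P.map g) T = prOf P (g ⁻¹' T) :=
  PMF.toOuterMeasure_map_apply g P T

theorem prOf_mono {Y : Type*} (P : PMF Y) {S T : Set Y} (h : S ⊆ T) : prOf P S ≤ prOf P T :=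
  P.toOuterMeasure.mono h

/-- Sampling i.i.d. commutes with pushing the distribution forward. -/
theorem iid_map {Z Z' : Type*} (D : PMF Z) (g : Z → Z') (m : ℕ) :
    iid (D.map g) m = (iid D m).map fun s i => g (s i) := by
  induction m with
  | zero =>
    simp only [iid, PMF.pure_map]
    congr 1
    exact Subsingleton.elim _ _
  | succ m ih =>
    simp only [iid, ih, PMF.bind_map, PMF.map_bind, PMF.pure_map, Function.comp_def]
    congr! 6 with f z i
    refine Fin.cases ?_ (fun j => ?_) i <;> simp

/-- Differential privacy is preserved by recoding each entry and post-processing the output. -/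
theorem DPAlg.comap_map {X X' Y Y' : Type*} {m : ℕ} {ε : ℝ} {A : (Fin m → X) → PMF Y}
    (hA : DPAlg ε A) (e : X' → X) (p : Y → Y') :
    DPAlg ε fun x : Fin m → X' => (A fun i => e (x i)).map p := by
  rintro x x' ⟨i, hi⟩ T
  simp only [prOf_map]
  exact hA _ _ ⟨i, fun j hj => congrArg e (hi j hj)⟩ _

theorem errD_map {Z Z' L : Type*} (D : PMF Z) (g : Z → Z') (c h : Z' → L) :
    errD (D.map g) c h = errD D (c ∘ g) (h ∘ g) :=
  prOf_map D g _

/-- Post-processing the labels of both functions cannot increase the error. -/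
theorem errD_comp_le {Z L L' : Type*} (D : PMF Z) (q : L → L') (c h : Z → L) :
    errD D (q ∘ c) (q ∘ h) ≤ errD D c h :=
  prOf_mono D fun _ hz hc => hz (congrArg q hc)

/-- Learnability transfers along an embedding `g` of domains, an encoding `l` of labels and a
decoding `q` of labels, provided every target concept is represented by a concept of the
larger class. -/
theorem PACLearner.transfer {Z Z' L L' : Type*} {m : ℕ} {α β : ℝ} {C : Set (Z → L)}
    {C' : Set (Z' → L')} {A : (Fin m → Z × L) → PMF (Z → L)} (hA : PACLearner α β C A)
    (g : Z' → Z) (l : L' → L) (q : L → L') (hq : Function.LeftInverse q l)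
    (hC : ∀ c' ∈ C', ∃ c ∈ C, ∀ z, c (g z) = l (c' z)) :
    PACLearner α β C' fun x =>
      (A fun i => (g (x i).1, l (x i).2)).map fun h => q ∘ h ∘ g := by
  intro c' hc' D
  obtain ⟨c, hc, hcg⟩ := hC c' hc'
  refine (hA c hc (D.map g)).trans ?_
  rw [iid_map, PMF.bind_map, ← PMF.map_bind, prOf_map]
  simp only [Function.comp_def, hcg]
  refine prOf_mono _ fun h hh => ?_
  have hc'' : c' = q ∘ c ∘ g := funext fun z => by simp [hcg, hq (c' z)]
  rw [Set.mem_ofPred_eq, errD_map] at hh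
  rw [Set.mem_preimage, Set.mem_ofPred_eq, hc'']
  exact (errD_comp_le D q (c ∘ g) (h ∘ g)).trans hh

theorem Par_zero_left {c : ℕ} (x : Fin c → Bool) : Par (fun _ => false) x = false := by
  simp [Par, xorFold]

/-- from an `ε`-DP `(α,β)`-PAC learner for the concatenated class `C_{b,c}` with
sample complexity `m` one obtains an `ε`-DP `(α,β)`-PAC learner for `Threshold_b` with sample
complexity `m`. -/
theorem stmt_2 (b c m : ℕ) (ε α β : ℝ) (hε : 0 < ε)
    (hα : 0 < α) (hα1 : α < 1) (hβ : 0 < β) (hβ1 : β < 1)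
    (A : (Fin m → ((Fin c → Bool) × (Fin b → Bool)) × (Bool × Bool)) →
          PMF ((Fin c → Bool) × (Fin b → Bool) → Bool × Bool))
    (hDP : DPAlg ε A)
    (hPAC : PACLearner α β (ConcatClass b c) A) :
    ∃ B : (Fin m → (Fin b → Bool) × Bool) → PMF ((Fin b → Bool) → Bool),
      DPAlg ε B ∧ PACLearner α β (ThresholdClass b) B := by
  let g : (Fin b → Bool) → (Fin c → Bool) × (Fin b → Bool) := fun y => (fun _ => false, y)
  let l : Bool → Bool × Bool := fun v => (false, v)
  have hC : ∀ f ∈ ThresholdClass b, ∃ f' ∈ ConcatClass b c, ∀ y, f' (g y) = l (f y) := by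
    rintro _ ⟨t, rfl⟩
    exact ⟨fun p => (Par (fun _ => false) p.1, Thr t p.2), ⟨fun _ => false, t, rfl⟩,
      fun y => Prod.ext (Par_zero_left _) rfl⟩
  refine ⟨fun x => (A fun i => (g (x i).1, l (x i).2)).map fun h => Prod.snd ∘ h ∘ g, ?_, ?_⟩
  · exact hDP.comap_map (fun z : (Fin b → Bool) × Bool => (g z.1, l z.2))
      (fun h => Prod.snd ∘ h ∘ g)
  · exact hPAC.transfer g l Prod.snd (fun _ => rfl) hC
end

section
/- Let c, d, n ∈ ℕ, ε > 0, and β ∈ [0,1). Suppose A : ({0,1}^c × {0,1}^{2^d})^n → PMF(tuples ({0,1}^d → {0,1}^c)) is an ε-differentially private algorithm that solves the all-2^d-parity task with string length c and confidence 1−β, i.e., for every tuple r = (r_j)_{j∈{0,1}^d} with each r_j ∈ {0,1}^c, when the n data points are generated i.i.d. by drawing x uniformly from {0,1}^c and outputting (x, (⟨x,r_j⟩ mod 2)_{j∈{0,1}^d}), A outputs the tuple r with probability at least 1−β. Then 2^{c·2^d} · e^{−εn} · (1−β) ≤ 1; equivalently, εn ≥ c·2^d·ln 2 + ln(1−β).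 -/
open scoped ENNReal

/-- The data-point distribution of the all-`2^d`-parity task with string length `c`:
draw `x` uniformly from `{0,1}^c` and output `(x, (⟨x, r_j⟩ mod 2)_{j ∈ {0,1}^d})`. -/
noncomputable def allParityDist (c d : ℕ) (r : (Fin d → Bool) → Fin c → Bool) :
    PMF ((Fin c → Bool) × ((Fin d → Bool) → Bool)) :=
  (PMF.uniformOfFintype (Fin c → Bool)).map fun x => (x, fun j => Par (r j) x)

/-- Group privacy: databases that differ only in their first `k` entries. -/
theorem DPAlg.prOf_le_of_eq_above {X Y : Type*} {m : ℕ} {ε : ℝ} {A : (Fin m → X) → PMF Y}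
    (hA : DPAlg ε A) (T : Set Y) (k : ℕ) (hk : k ≤ m) (x x' : Fin m → X)
    (h : ∀ j : Fin m, k ≤ j → x j = x' j) :
    prOf (A x) T ≤ ENNReal.ofReal (Real.exp ε) ^ k * prOf (A x') T := by
  induction k generalizing x with
  | zero =>
    have hx : x = x' := funext fun j => h j (Nat.zero_le _)
    simp [hx]
  | succ k ih =>
    let i : Fin m := ⟨k, hk⟩
    let y : Fin m → X := Function.update x i (x' i)
    have hxy : Neighbor x y := ⟨i, fun j hj => by simp [y, hj]⟩
    have hy : ∀ j : Fin m, k ≤ j → y j = x' j := by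
      intro j hj
      by_cases hji : j = i
      · simp [y, hji]
      · have hne : (j : ℕ) ≠ k := fun e => hji (Fin.ext e)
        simpa [y, hji] using h j (by omega)
    calc prOf (A x) T ≤ ENNReal.ofReal (Real.exp ε) * prOf (A y) T := hA x y hxy T
      _ ≤ ENNReal.ofReal (Real.exp ε) *
          (ENNReal.ofReal (Real.exp ε) ^ k * prOf (A x') T) := by
        gcongr
        exact ih (by omega) y hy
      _ = _ := by rw [pow_succ']; ring

/-- Group privacy for two arbitrary databases of size `m`. -/
theorem DPAlg.prOf_le {X Y : Type*} {m : ℕ} {ε : ℝ} {A : (Fin m → X) → PMF Y}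
    (hA : DPAlg ε A) (T : Set Y) (x x' : Fin m → X) :
    prOf (A x) T ≤ ENNReal.ofReal (Real.exp ε) ^ m * prOf (A x') T :=
  hA.prOf_le_of_eq_above T m le_rfl x x' fun j hj => absurd j.isLt (not_lt.mpr hj)

/-- A uniform bound on conditional probabilities bounds the probability under a mixture. -/
theorem prOf_bind_le {X Y : Type*} (P : PMF X) (A : X → PMF Y) (T : Set Y) (b : ℝ≥0∞)
    (h : ∀ x, prOf (A x) T ≤ b) : prOf (P.bind A) T ≤ b := by
  unfold prOf at *
  rw [PMF.toOuterMeasure_bind_apply]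
  calc ∑' x, P x * (A x).toOuterMeasure T ≤ ∑' x, P x * b :=
        ENNReal.tsum_le_tsum fun x => by gcongr; exact h x
    _ = b := by rw [ENNReal.tsum_mul_right, P.tsum_coe, one_mul]

/-- Singleton probabilities over a finite type sum to one. -/
theorem sum_prOf_singleton {Y : Type*} [Fintype Y] (P : PMF Y) : ∑ y, prOf P {y} = 1 := by
  simp only [prOf, PMF.toOuterMeasure_apply_singleton]
  exact (tsum_fintype P).symm.trans P.tsum_coe

/-- Packing bound: a private algorithm that recovers every element of a finite type `Y` from
random databases has probability of success at most `e^{εm} / |Y|`. -/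
theorem DPAlg.card_mul_le {X Y : Type*} [Fintype Y] [Nonempty X] {m : ℕ} {ε : ℝ}
    {A : (Fin m → X) → PMF Y} (hA : DPAlg ε A) (D : Y → PMF (Fin m → X)) (p : ℝ≥0∞)
    (h : ∀ y, p ≤ prOf ((D y).bind A) {y}) :
    Fintype.card Y * p ≤ ENNReal.ofReal (Real.exp ε) ^ m := by
  obtain ⟨x₀⟩ : Nonempty (Fin m → X) := inferInstance
  calc (Fintype.card Y : ℝ≥0∞) * p = ∑ _y : Y, p := by simp
    _ ≤ ∑ y, ENNReal.ofReal (Real.exp ε) ^ m * prOf (A x₀) {y} :=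
        Finset.sum_le_sum fun y _ =>
          (h y).trans (prOf_bind_le _ _ _ _ fun x => hA.prOf_le {y} x x₀)
    _ = ENNReal.ofReal (Real.exp ε) ^ m := by
        rw [← Finset.mul_sum, sum_prOf_singleton, mul_one]

/-- a packing lower bound for the all-`2^d`-parity task. If an `ε`-DP algorithm on
`n` data points outputs the whole tuple `r` with probability at least `1 − β` for every `r`,
then `2^{c·2^d} · e^{−εn} · (1 − β) ≤ 1`. -/
theorem stmt_3 (c d n : ℕ) (ε β : ℝ) (hε : 0 < ε) (hβ0 : 0 ≤ β) (hβ1 : β < 1)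
    (A : (Fin n → (Fin c → Bool) × ((Fin d → Bool) → Bool)) →
          PMF ((Fin d → Bool) → Fin c → Bool))
    (hDP : DPAlg ε A)
    (hCorrect : ∀ r : (Fin d → Bool) → Fin c → Bool,
      ENNReal.ofReal (1 - β) ≤ prOf ((iid (allParityDist c d r) n).bind A) {r}) :
    (2 : ℝ) ^ (c * 2 ^ d) * Real.exp (-(ε * n)) * (1 - β) ≤ 1 := by
  have hcard : Fintype.card ((Fin d → Bool) → Fin c → Bool) = 2 ^ (c * 2 ^ d) := by
    simp [pow_mul]
  have key := hDP.card_mul_le (fun r => iid (allParityDist c d r) n) _ hCorrect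
  rw [hcard, ← ENNReal.ofReal_natCast, ← ENNReal.ofReal_mul (Nat.cast_nonneg _),
    ← ENNReal.ofReal_pow (Real.exp_nonneg _),
    ENNReal.ofReal_le_ofReal_iff (by positivity), ← Real.exp_nat_mul] at key
  push_cast at key
  calc (2 : ℝ) ^ (c * 2 ^ d) * Real.exp (-(ε * n)) * (1 - β)
      = (2 : ℝ) ^ (c * 2 ^ d) * (1 - β) * Real.exp (-(ε * n)) := by ring
    _ ≤ Real.exp (n * ε) * Real.exp (-(ε * n)) := by gcongr
    _ = 1 := by rw [← Real.exp_add, mul_comm (n : ℝ) ε, add_neg_cancel, Real.exp_zero]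
end
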